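/- Under the Tanner graph setup, for every integer k with 3 ≤ k ≤ 8, the girth g of G satisfies g ≥ 2k if and only if T_j = trace((H Hᵀ)^j) = |E|·A_{2j} for every integer j with 2 ≤ j ≤ k − 1, where A_4, A_6, A_8, A_10, A_12, A_14 are the constants defined in the context. (This is the girth characterization of the paper's Corollary 5, in the index range established by the chain of equivalences in its appendix.) -/

import Mathlib

/-!
The traces of powers of `B = H Hᵀ` are compared with counts of non-backtracking walks.

Let `Y l` (`nbEven H l` below) be the matrix whose `(i, i')` entry is the number of non-backtracking walks of length
`2 (l + 1)` between the check nodes `i` and `i'`. Biregularity gives the three-term recurrence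
`B * Y (l + 1) = Y (l + 2) + (q1 + q2) • Y (l + 1) + (q1 * q2) • Y l`
(with boundary corrections for small `l`), so `B ^ J` equals `Y (J - 1)` plus a combination of
`Y 0, …, Y (J - 2)` and the identity. The coefficient of the identity counts closed walks of
length `2 J` in the biregular tree, and it is `(q2 + 1) * A J`. Hence, as long as the traces of
`Y 0, …, Y (J - 2)` vanish, `trace (B ^ J) = |E| * A J + trace (Y (J - 1))`
(`trace_eq_of_recurrence`), and by strong induction the trace conditions for `2 ≤ j ≤ k - 1` say
exactly that `trace (Y l) = 0` for all `l < k - 1`, i.e. that no closed non-backtracking walk of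
length less than `2 k` is based at a check node.

This last condition is equivalent to girth at least `2 k`. A closed non-backtracking walk of
positive length contains a cycle using only its edges (`exists_cycle_of_isChain`), since in a
forest non-backtracking walks are paths. Conversely, a cycle is a closed non-backtracking walk;
in the bipartite Tanner graph it has even length and can be rotated to start at a check node.
-/


open Matrix Finset

/-- The Tanner graph of a real matrix `H`: the simple bipartite graph on `α ⊕ β`
in which check node `i` is adjacent to variable node `j` iff `H i j = 1`. -/
def tannerGraph {α β : Type*} (H : Matrix α β ℝ) : SimpleGraph (α ⊕ β) :=
  SimpleGraph.fromRel (fun u v => ∃ i j, u = Sum.inl i ∧ v = Sum.inr j ∧ H i j = 1)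

/-- The number of pairs `(v, w)` where `w` is a closed walk of length `l` based at `v`
that is a cycle. -/
noncomputable def cycleCount {V : Type*} (G : SimpleGraph V) (l : ℕ) : ℕ :=
  Nat.card {p : Σ v : V, G.Walk v v // p.2.length = l ∧ p.2.IsCycle}

/-- `N_{2k}`: the number of cycles of length `2k` in `G`, as a real number. -/
noncomputable def numCycles {V : Type*} (G : SimpleGraph V) (k : ℕ) : ℝ :=
  (cycleCount G (2 * k) : ℝ) / (4 * k)

open SimpleGraph

/-! ### Counting non-backtracking walks -/

/-- A closed non-backtracking walk of positive length cannot live in a forest, so the graph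
spanned by its edges contains a cycle. -/
lemma exists_cycle_of_isChain {V : Type*} (G : SimpleGraph V) {u : V} (p : G.Walk u u) (hp : p.length ≠ 0)
    (hchain : List.IsChain (· ≠ ·) p.edges) :
    ∃ (a : V) (c : G.Walk a a), c.IsCycle ∧ c.length ≤ p.length := by
  set G' : SimpleGraph V := fromEdgeSet {e | e ∈ p.edges} with hG'
  have hmem : ∀ e ∈ p.edges, e ∈ G'.edgeSet := by
    intro e he
    rw [hG', edgeSet_fromEdgeSet]
    exact ⟨he, G.not_isDiag_of_mem_edgeSet (p.edges_subset_edgeSet he)⟩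
  have hle : G' ≤ G := by
    rw [← edgeSet_subset_edgeSet, hG', edgeSet_fromEdgeSet]
    exact fun e he => p.edges_subset_edgeSet he.1
  have hcyc : ¬ G'.IsAcyclic := by
    intro hac
    have hpath := (hac.isPath_iff_isChain (p.transfer G' hmem)).mpr
      (by rwa [Walk.edges_transfer])
    have hnil := Walk.isPath_iff_nil.mp hpath
    exact hp (by rw [← Walk.length_transfer p hmem, Walk.length_eq_zero_iff.mpr hnil])
  unfold IsAcyclic at hcyc
  push Not at hcyc
  obtain ⟨a, c, hc⟩ := hcyc
  refine ⟨a, c.mapLe hle, hc.mapLe hle, ?_⟩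
  rw [Walk.length_mapLe, ← Walk.length_edges, ← Walk.length_edges]
  refine (List.subperm_of_subset hc.edges_nodup fun e he => ?_).length_le
  have := c.edges_subset_edgeSet he
  rw [hG', edgeSet_fromEdgeSet] at this
  exact this.1

section NonBacktracking

variable {V : Type*} [Fintype V]

open Classical in
/-- The number of non-backtracking walks of length `r + 1` in `G` from `u` to `v` whose first
step is `u → w`. -/
noncomputable def nbCount (G : SimpleGraph V) : ℕ → V → V → V → ℝ
  | 0, u, w, v => if G.Adj u w ∧ w = v then 1 else 0
  | r + 1, u, w, v => if G.Adj u w then ∑ x ∈ univ.erase u, nbCount G r w x v else 0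

/-- The number of non-backtracking walks of length `r + 1` in `G` from `u` to `v`. -/
noncomputable def nbTotal (G : SimpleGraph V) (r : ℕ) (u v : V) : ℝ :=
  ∑ w, nbCount G r u w v

variable (G : SimpleGraph V)

lemma nbCount_nonneg (r : ℕ) (u w v : V) : 0 ≤ nbCount G r u w v := by
  induction r generalizing u w with
  | zero => unfold nbCount; split_ifs <;> norm_num
  | succ r ih =>
    unfold nbCount
    split_ifs
    · exact Finset.sum_nonneg fun x _ => ih w x
    · exact le_rfl

lemma nbTotal_nonneg (r : ℕ) (u v : V) : 0 ≤ nbTotal G r u v :=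
  Finset.sum_nonneg fun w _ => nbCount_nonneg G r u w v

lemma nbCount_eq_zero_of_not_adj (r : ℕ) {u w : V} (v : V) (h : ¬ G.Adj u w) :
    nbCount G r u w v = 0 := by
  cases r <;> simp [nbCount, h]

open Classical in
lemma nbTotal_zero (u v : V) : nbTotal G 0 u v = if G.Adj u v then 1 else 0 := by
  simp only [nbTotal, nbCount]
  rw [Finset.sum_eq_single v]
  · simp
  · intro b _ hb; simp [hb]
  · simp

open Classical in
lemma nbCount_succ (r : ℕ) (u w v : V) :
    nbCount G (r + 1) u w v
      = (if G.Adj u w then (nbTotal G r w v - nbCount G r w u v) else 0) := by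
  rw [nbCount, Finset.sum_erase_eq_sub (Finset.mem_univ u)]
  rfl

open Classical in
/-- Extending a walk at its start: all extensions minus the backtracking ones. -/
lemma nbTotal_succ (r : ℕ) (u v : V) :
    nbTotal G (r + 1) u v
      = (∑ w, if G.Adj u w then nbTotal G r w v else 0)
        - ∑ w, if G.Adj u w then nbCount G r w u v else 0 := by
  rw [nbTotal, ← Finset.sum_sub_distrib]
  refine Finset.sum_congr rfl fun w _ => ?_
  rw [nbCount_succ]
  split_ifs <;> simp

open Classical in
lemma nbTotal_one (u v : V) (q : ℝ) (hq : (∑ w, if G.Adj u w then (1 : ℝ) else 0) = q + 1) :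
    nbTotal G 1 u v
      = (∑ w, if G.Adj u w then nbTotal G 0 w v else 0) - (if u = v then q + 1 else 0) := by
  rw [nbTotal_succ]
  congr 1
  split_ifs with h
  · rw [← hq]
    refine Finset.sum_congr rfl fun w _ => ?_
    subst h
    by_cases hw : G.Adj u w
    · simp [nbCount, hw, hw.symm]
    · simp [hw]
  · simp [nbCount, h]

open Classical in
lemma nbTotal_add_two (r : ℕ) (u v : V) (q : ℝ)
    (hq : (∑ w, if G.Adj u w then (1 : ℝ) else 0) = q + 1) :
    nbTotal G (r + 2) u v
      = (∑ w, if G.Adj u w then nbTotal G (r + 1) w v else 0) - q * nbTotal G r u v := by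
  rw [nbTotal_succ]
  congr 1
  have h1 : ∀ w, (if G.Adj u w then nbCount G (r + 1) w u v else 0)
      = (if G.Adj u w then (1 : ℝ) else 0) * nbTotal G r u v - nbCount G r u w v := by
    intro w
    by_cases hw : G.Adj u w
    · simp [nbCount_succ, hw, hw.symm]
    · simp [hw, nbCount_eq_zero_of_not_adj]
  simp_rw [h1]
  rw [Finset.sum_sub_distrib, ← Finset.sum_mul, hq]
  change _ - nbTotal G r u v = _
  ring

/-- The non-backtracking condition is expressed as consecutive edges being distinct. -/
lemma exists_walk_of_nbCount (r : ℕ) (u w v : V) (h : nbCount G r u w v ≠ 0) :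
    ∃ (hadj : G.Adj u w) (p : G.Walk w v), p.length = r ∧
      List.IsChain (· ≠ ·) (Walk.cons hadj p).edges := by
  classical
  induction r generalizing u w with
  | zero =>
    simp only [nbCount, ne_eq, ite_eq_right_iff, one_ne_zero, imp_false, not_not] at h
    obtain ⟨hadj, rfl⟩ := h
    exact ⟨hadj, Walk.nil, by simp⟩
  | succ r ih =>
    have hadj : G.Adj u w := by
      by_contra hn
      exact h (nbCount_eq_zero_of_not_adj G _ _ hn)
    simp only [nbCount, hadj, if_true] at h
    obtain ⟨x, hx, hx0⟩ := Finset.exists_ne_zero_of_sum_ne_zero h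
    obtain ⟨hwx, p, hp, hchain⟩ := ih w x hx0
    refine ⟨hadj, Walk.cons hwx p, by simp [hp], ?_⟩
    rw [Walk.edges_cons] at hchain
    rw [Walk.edges_cons, Walk.edges_cons]
    refine List.isChain_cons_cons.mpr ⟨?_, hchain⟩
    have hxu : x ≠ u := (Finset.mem_erase.mp hx).1
    intro he
    rw [Sym2.eq_iff] at he
    rcases he with ⟨h1, _⟩ | ⟨h1, _⟩
    · exact hadj.ne h1
    · exact hxu h1.symm

lemma nbCount_pos_of_walk (r : ℕ) (u w v : V) (hadj : G.Adj u w) (p : G.Walk w v)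
    (hp : p.length = r) (hchain : List.IsChain (· ≠ ·) (Walk.cons hadj p).edges) :
    0 < nbCount G r u w v := by
  classical
  induction r generalizing u w with
  | zero =>
    obtain rfl := Walk.eq_of_length_eq_zero hp
    simp [nbCount, hadj]
  | succ r ih =>
    cases p with
    | nil => simp at hp
    | @cons _ x _ hwx p' =>
      rw [Walk.edges_cons, Walk.edges_cons] at hchain
      obtain ⟨hne, hchain'⟩ := List.isChain_cons_cons.mp hchain
      have hpos := ih w x hwx p' (by simpa using hp) (by rwa [Walk.edges_cons])
      have hxu : x ≠ u := by
        rintro rfl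
        exact hne Sym2.eq_swap
      simp only [nbCount, hadj, if_true]
      exact Finset.sum_pos' (fun y _ => nbCount_nonneg G r w y v)
        ⟨x, Finset.mem_erase.mpr ⟨hxu, Finset.mem_univ x⟩, hpos⟩

lemma nbTotal_pos_of_isCycle {u : V} (p : G.Walk u u) (hp : p.IsCycle) (r : ℕ)
    (hr : p.length = r + 1) : 0 < nbTotal G r u u := by
  cases p with
  | nil => simp at hr
  | @cons _ w _ hadj p' =>
    exact Finset.sum_pos' (fun y _ => nbCount_nonneg G r u y u)
      ⟨w, Finset.mem_univ w, nbCount_pos_of_walk G r u w u hadj p' (by simpa using hr)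
        hp.edges_nodup.isChain⟩

lemma exists_cycle_of_nbTotal_ne_zero (r : ℕ) (u : V) (h : nbTotal G r u u ≠ 0) :
    ∃ (a : V) (c : G.Walk a a), c.IsCycle ∧ c.length ≤ r + 1 := by
  obtain ⟨w, _, hw⟩ := Finset.exists_ne_zero_of_sum_ne_zero h
  obtain ⟨hadj, p, hp, hchain⟩ := exists_walk_of_nbCount G r u w u hw
  obtain ⟨a, c, hc, hl⟩ := exists_cycle_of_isChain G (Walk.cons hadj p) (by simp) hchain
  exact ⟨a, c, hc, by simpa [hp] using hl⟩

end NonBacktracking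

/-! ### The Tanner graph -/

section Tanner

variable {m n : ℕ} (H : Matrix (Fin m) (Fin n) ℝ)

lemma tannerGraph_adj_inl_inr (i : Fin m) (j : Fin n) :
    (tannerGraph H).Adj (Sum.inl i) (Sum.inr j) ↔ H i j = 1 := by
  simp [tannerGraph, SimpleGraph.fromRel_adj]

lemma tannerGraph_adj_inr_inl (i : Fin m) (j : Fin n) :
    (tannerGraph H).Adj (Sum.inr j) (Sum.inl i) ↔ H i j = 1 := by
  rw [SimpleGraph.adj_comm, tannerGraph_adj_inl_inr]

lemma tannerGraph_not_adj_inl (i i' : Fin m) :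
    ¬ (tannerGraph H).Adj (Sum.inl i) (Sum.inl i') := by
  simp [tannerGraph, SimpleGraph.fromRel_adj]

lemma tannerGraph_not_adj_inr (j j' : Fin n) :
    ¬ (tannerGraph H).Adj (Sum.inr j) (Sum.inr j') := by
  simp [tannerGraph, SimpleGraph.fromRel_adj]

open Classical in
lemma sum_adj_inl (hent : ∀ i j, H i j = 0 ∨ H i j = 1) (i : Fin m)
    (φ : Fin m ⊕ Fin n → ℝ) :
    (∑ w, if (tannerGraph H).Adj (Sum.inl i) w then φ w else 0)
      = ∑ j, H i j * φ (Sum.inr j) := by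
  rw [Fintype.sum_sum_type]
  simp only [tannerGraph_not_adj_inl, if_false, Finset.sum_const_zero, zero_add,
    tannerGraph_adj_inl_inr]
  refine Finset.sum_congr rfl fun j _ => ?_
  rcases hent i j with h | h <;> simp [h]

open Classical in
lemma sum_adj_inr (hent : ∀ i j, H i j = 0 ∨ H i j = 1) (j : Fin n)
    (φ : Fin m ⊕ Fin n → ℝ) :
    (∑ w, if (tannerGraph H).Adj (Sum.inr j) w then φ w else 0)
      = ∑ i, H i j * φ (Sum.inl i) := by
  rw [Fintype.sum_sum_type]
  simp only [tannerGraph_not_adj_inr, if_false, Finset.sum_const_zero, add_zero,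
    tannerGraph_adj_inr_inl]
  refine Finset.sum_congr rfl fun i _ => ?_
  rcases hent i j with h | h <;> simp [h]

lemma sum_eq_card {ι : Type*} [Fintype ι] (f : ι → ℝ) (hf : ∀ i, f i = 0 ∨ f i = 1) :
    ∑ i, f i = (Nat.card {i // f i = 1} : ℝ) := by
  classical
  rw [Nat.card_eq_fintype_card, Fintype.card_subtype, Finset.card_filter]
  push_cast
  refine Finset.sum_congr rfl fun i _ => ?_
  rcases hf i with h | h <;> simp [h]

/-- Non-backtracking walks of length `2 l + 1` from variable nodes to check nodes. -/
noncomputable def nbOdd (l : ℕ) : Matrix (Fin n) (Fin m) ℝ :=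
  Matrix.of fun j i => nbTotal (tannerGraph H) (2 * l) (Sum.inr j) (Sum.inl i)

/-- Non-backtracking walks of length `2 (l + 1)` between check nodes. -/
noncomputable def nbEven (l : ℕ) : Matrix (Fin m) (Fin m) ℝ :=
  Matrix.of fun i i' => nbTotal (tannerGraph H) (2 * l + 1) (Sum.inl i) (Sum.inl i')

variable {H} {q1 q2 : ℕ}

lemma nbOdd_zero (hent : ∀ i j, H i j = 0 ∨ H i j = 1) : nbOdd H 0 = Hᵀ := by
  classical
  ext j i
  simp only [nbOdd, Matrix.of_apply, mul_zero, nbTotal_zero, tannerGraph_adj_inr_inl,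
    Matrix.transpose_apply]
  rcases hent i j with h | h <;> simp [h]

lemma nbEven_zero (hent : ∀ i j, H i j = 0 ∨ H i j = 1)
    (hrow : ∀ i, ∑ j, H i j = (q2 : ℝ) + 1) :
    nbEven H 0 = H * nbOdd H 0 - ((q2 : ℝ) + 1) • 1 := by
  classical
  ext i i'
  simp only [nbEven, Matrix.of_apply, mul_zero, zero_add, Matrix.sub_apply, Matrix.smul_apply,
    Matrix.mul_apply, nbOdd, smul_eq_mul, Matrix.one_apply]
  rw [nbTotal_one _ _ _ (q2 : ℝ) (by rw [sum_adj_inl H hent]; simpa using hrow i),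
    sum_adj_inl H hent]
  simp

lemma nbEven_succ (hent : ∀ i j, H i j = 0 ∨ H i j = 1)
    (hrow : ∀ i, ∑ j, H i j = (q2 : ℝ) + 1) (l : ℕ) :
    nbEven H (l + 1) = H * nbOdd H (l + 1) - (q2 : ℝ) • nbEven H l := by
  classical
  ext i i'
  simp only [nbEven, Matrix.of_apply, Matrix.sub_apply, Matrix.smul_apply,
    Matrix.mul_apply, nbOdd, smul_eq_mul]
  rw [show 2 * (l + 1) + 1 = (2 * l + 1) + 2 by ring,
    nbTotal_add_two _ _ _ _ (q2 : ℝ) (by rw [sum_adj_inl H hent]; simpa using hrow i),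
    sum_adj_inl H hent]
  rfl

lemma nbOdd_succ (hent : ∀ i j, H i j = 0 ∨ H i j = 1)
    (hcol : ∀ j, ∑ i, H i j = (q1 : ℝ) + 1) (l : ℕ) :
    nbOdd H (l + 1) = Hᵀ * nbEven H l - (q1 : ℝ) • nbOdd H l := by
  classical
  ext j i
  simp only [nbEven, Matrix.of_apply, Matrix.sub_apply, Matrix.smul_apply,
    Matrix.mul_apply, nbOdd, smul_eq_mul, Matrix.transpose_apply]
  rw [show 2 * (l + 1) = (2 * l) + 2 by ring,
    nbTotal_add_two _ _ _ _ (q1 : ℝ) (by rw [sum_adj_inr H hent]; simpa using hcol j),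
    sum_adj_inr H hent]

lemma gram_mul_nbEven_zero (hent : ∀ i j, H i j = 0 ∨ H i j = 1)
    (hrow : ∀ i, ∑ j, H i j = (q2 : ℝ) + 1)
    (hcol : ∀ j, ∑ i, H i j = (q1 : ℝ) + 1) :
    H * Hᵀ * nbEven H 0 = nbEven H 1 + ((q1 : ℝ) + q2) • nbEven H 0
      + ((q1 : ℝ) * (q2 + 1)) • 1 := by
  have h1 := nbOdd_succ hent hcol 0
  have h2 := nbEven_succ hent hrow 0
  have h3 := nbEven_zero hent hrow
  rw [Matrix.mul_assoc, ← sub_add_cancel (Hᵀ * nbEven H 0) ((q1 : ℝ) • nbOdd H 0), ← h1,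
    Matrix.mul_add, Matrix.mul_smul, h2]
  have h4 : H * nbOdd H 0 = nbEven H 0 + ((q2 : ℝ) + 1) • 1 := by rw [h3]; abel
  rw [h4]
  module

lemma gram_mul_nbEven_succ (hent : ∀ i j, H i j = 0 ∨ H i j = 1)
    (hrow : ∀ i, ∑ j, H i j = (q2 : ℝ) + 1)
    (hcol : ∀ j, ∑ i, H i j = (q1 : ℝ) + 1) (l : ℕ) :
    H * Hᵀ * nbEven H (l + 1) = nbEven H (l + 2) + ((q1 : ℝ) + q2) • nbEven H (l + 1)
      + ((q1 : ℝ) * q2) • nbEven H l := by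
  have h1 := nbOdd_succ hent hcol (l + 1)
  have h2 := nbEven_succ hent hrow (l + 1)
  have h3 := nbEven_succ hent hrow l
  rw [Matrix.mul_assoc, ← sub_add_cancel (Hᵀ * nbEven H (l + 1)) ((q1 : ℝ) • nbOdd H (l + 1)),
    ← h1, Matrix.mul_add, Matrix.mul_smul, h2]
  have h4 : H * nbOdd H (l + 1) = nbEven H (l + 1) + (q2 : ℝ) • nbEven H l := by rw [h3]; abel
  rw [h4]
  module

lemma nbEven_diag (l : ℕ) (i : Fin m) : (nbEven H l).diag i
    = nbTotal (tannerGraph H) (2 * l + 1) (Sum.inl i) (Sum.inl i) := rfl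

lemma nbEven_diag_nonneg (l : ℕ) (i : Fin m) : 0 ≤ (nbEven H l).diag i := by
  rw [nbEven_diag]
  exact nbTotal_nonneg _ _ _ _

/-- A cycle of a Tanner graph has even length and visits a check node. -/
lemma exists_rotated_cycle {a : Fin m ⊕ Fin n} (c : (tannerGraph H).Walk a a)
    (hc : c.IsCycle) :
    Even c.length ∧ ∃ (i : Fin m) (c' : (tannerGraph H).Walk (Sum.inl i) (Sum.inl i)),
      c'.IsCycle ∧ c'.length = c.length := by
  classical
  refine ⟨?_, ?_⟩
  · let col : (tannerGraph H).Coloring Bool := Coloring.mk (fun v => v.isLeft) (by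
      rintro (i | j) (i' | j') hadj
      · exact absurd hadj (tannerGraph_not_adj_inl H i i')
      · simp
      · simp
      · exact absurd hadj (tannerGraph_not_adj_inr H j j'))
    exact (col.even_length_iff_congr c).mpr Iff.rfl
  · cases a with
    | inl i => exact ⟨i, c, hc, rfl⟩
    | inr j =>
      have hadj := c.adj_snd hc.not_nil
      have hmem : c.snd ∈ c.support := c.getVert_mem_support 1
      rcases hs : c.snd with i | j'
      · rw [hs] at hmem
        exact ⟨i, c.rotate (Sum.inl i) hmem, hc.rotate hmem, by simp⟩
      · rw [hs] at hadj
        exact absurd hadj (tannerGraph_not_adj_inr H j j')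

lemma le_egirth_iff_trace_nbEven (k : ℕ) :
    ((2 * k : ℕ) : ℕ∞) ≤ (tannerGraph H).egirth ↔
      ∀ l, l + 1 < k → (nbEven H l).trace = 0 := by
  rw [le_egirth]
  constructor
  · intro hg l hl
    by_contra hne
    obtain ⟨i, _, hi⟩ := Finset.exists_ne_zero_of_sum_ne_zero hne
    obtain ⟨a, c, hc, hlen⟩ := exists_cycle_of_nbTotal_ne_zero _ _ _ (nbEven_diag l i ▸ hi)
    have := hg a c hc
    have h2 : 2 * k ≤ c.length := by exact_mod_cast this
    omega
  · intro ht a c hc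
    by_contra hlt
    have hlt' : c.length < 2 * k := by
      by_contra hge
      exact hlt (by exact_mod_cast not_lt.mp hge)
    obtain ⟨⟨r, hr⟩, i, c', hc', hlen⟩ := exists_rotated_cycle c hc
    have h3 := hc.three_le_length
    obtain ⟨l, rfl⟩ : ∃ l, r = l + 1 := ⟨r - 1, by omega⟩
    have hpos : 0 < (nbEven H l).diag i := by
      rw [nbEven_diag]
      exact nbTotal_pos_of_isCycle _ c' hc' (2 * l + 1) (by omega)
    have : 0 < (nbEven H l).trace :=
      Finset.sum_pos' (fun i _ => nbEven_diag_nonneg l i) ⟨i, Finset.mem_univ i, hpos⟩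
    exact this.ne' (ht l (by omega))

end Tanner

/-! ### Comparing traces -/

/-- For `2 ≤ j ≤ 7`, the constant `A_{2j}`: in the biregular tree with vertex degrees `x + 1` and
`y + 1`, a vertex of degree `y + 1` is the base of `(y + 1) * treeConst x y j` closed walks of
length `2 j`. -/
noncomputable def treeConst (x y : ℝ) : ℕ → ℝ :=
  let s : ℝ := x + y
  let c : ℝ := x * y
  let A4 : ℝ := x + y + 1
  let A6 : ℝ := (x + y + 1) ^ 2 + c
  let A8 : ℝ := (x + y + 1) ^ 3 + c * (3 * x + 3 * y + 2)
  let A10 : ℝ := -1 + (x ^ 4 - x ^ 3 + x ^ 2 - x + 1)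
      + (y ^ 4 - y ^ 3 + y ^ 2 - y + 1)
      - 5 * (∑ j ∈ Finset.range 5, x ^ j * y ^ (4 - j))
      + 5 * s * A8 - (10 * s ^ 2 - 5 * c) * A6 + (10 * s ^ 3 - 15 * c * s) * A4
  let A12 : ℝ := -1 - (x ^ 5 - x ^ 4 + x ^ 3 - x ^ 2 + x - 1)
      - (y ^ 5 - y ^ 4 + y ^ 3 - y ^ 2 + y - 1)
      + 6 * (∑ j ∈ Finset.range 6, x ^ j * y ^ (5 - j))
      + 6 * s * A10 - (15 * s ^ 2 - 6 * c) * A8 + (20 * s ^ 3 - 24 * c * s) * A6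
      - (15 * s ^ 4 - 36 * c * s ^ 2 + 9 * c ^ 2) * A4
  let A14 : ℝ := -1 + (x ^ 6 - x ^ 5 + x ^ 4 - x ^ 3 + x ^ 2 - x + 1)
      + (y ^ 6 - y ^ 5 + y ^ 4 - y ^ 3 + y ^ 2 - y + 1)
      - 7 * (∑ j ∈ Finset.range 7, x ^ j * y ^ (6 - j))
      + 7 * s * A12 - (21 * s ^ 2 - 7 * c) * A10 + (35 * s ^ 3 - 35 * c * s) * A8
      - (35 * s ^ 4 - 70 * c * s ^ 2 + 14 * c ^ 2) * A6
      + (21 * s ^ 5 - 70 * c * s ^ 3 + 42 * c ^ 2 * s) * A4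
  let A : ℕ → ℝ := fun j =>
    if j = 2 then A4 else if j = 3 then A6 else if j = 4 then A8
    else if j = 5 then A10 else if j = 6 then A12 else A14
  A

/-- `T j` and `t j l` play the roles of `trace (B ^ j)` and `trace (B ^ j * Y l)`. -/
lemma trace_eq_of_recurrence (x y M : ℝ) (T : ℕ → ℝ) (t : ℕ → ℕ → ℝ) (hT0 : T 0 = M)
    (hT : ∀ j, T (j + 1) = t j 0 + (y + 1) * T j)
    (ht0 : ∀ j, t (j + 1) 0 = t j 1 + (x + y) * t j 0 + x * (y + 1) * T j)
    (ht : ∀ j l, t (j + 1) (l + 1) = t j (l + 2) + (x + y) * t j (l + 1) + x * y * t j l)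
    (J : ℕ) (hJ2 : 2 ≤ J) (hJ7 : J ≤ 7) (hz : ∀ l, l + 1 < J → t 0 l = 0) :
    T J = t 0 (J - 1) + M * (y + 1) * treeConst x y J := by
  have ht1 : ∀ j, t (j + 1) 1 = t j 2 + (x + y) * t j 1 + x * y * t j 0 := fun j => ht j 0
  have ht2 : ∀ j, t (j + 1) 2 = t j 3 + (x + y) * t j 2 + x * y * t j 1 := fun j => ht j 1
  have ht3 : ∀ j, t (j + 1) 3 = t j 4 + (x + y) * t j 3 + x * y * t j 2 := fun j => ht j 2
  have ht4 : ∀ j, t (j + 1) 4 = t j 5 + (x + y) * t j 4 + x * y * t j 3 := fun j => ht j 3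
  have ht5 : ∀ j, t (j + 1) 5 = t j 6 + (x + y) * t j 5 + x * y * t j 4 := fun j => ht j 4
  interval_cases J
  · have z0 := hz 0 (by norm_num)
    simp only [hT, ht0, hT0, z0, treeConst, Finset.sum_range_succ, Finset.sum_range_zero]
    norm_num
    ring
  · have z0 := hz 0 (by norm_num)
    have z1 := hz 1 (by norm_num)
    simp only [hT, ht0, ht1, hT0, z0, z1, treeConst, Finset.sum_range_succ, Finset.sum_range_zero]
    norm_num
    ring
  · have z0 := hz 0 (by norm_num)
    have z1 := hz 1 (by norm_num)
    have z2 := hz 2 (by norm_num)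
    simp only [hT, ht0, ht1, ht2, hT0, z0, z1, z2, treeConst, Finset.sum_range_succ, Finset.sum_range_zero]
    norm_num
    ring
  · have z0 := hz 0 (by norm_num)
    have z1 := hz 1 (by norm_num)
    have z2 := hz 2 (by norm_num)
    have z3 := hz 3 (by norm_num)
    simp only [hT, ht0, ht1, ht2, ht3, hT0, z0, z1, z2, z3, treeConst, Finset.sum_range_succ, Finset.sum_range_zero]
    norm_num
    ring
  · have z0 := hz 0 (by norm_num)
    have z1 := hz 1 (by norm_num)
    have z2 := hz 2 (by norm_num)
    have z3 := hz 3 (by norm_num)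
    have z4 := hz 4 (by norm_num)
    simp only [hT, ht0, ht1, ht2, ht3, ht4, hT0, z0, z1, z2, z3, z4, treeConst, Finset.sum_range_succ, Finset.sum_range_zero]
    norm_num
    ring
  · have z0 := hz 0 (by norm_num)
    have z1 := hz 1 (by norm_num)
    have z2 := hz 2 (by norm_num)
    have z3 := hz 3 (by norm_num)
    have z4 := hz 4 (by norm_num)
    have z5 := hz 5 (by norm_num)
    simp only [hT, ht0, ht1, ht2, ht3, ht4, ht5, hT0, z0, z1, z2, z3, z4, z5, treeConst, Finset.sum_range_succ, Finset.sum_range_zero]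
    norm_num
    ring

/-- Corollary 5 of the paper: for `3 ≤ k ≤ 8`, the girth of the Tanner graph is at
least `2k` if and only if `trace((H Hᵀ)^j) = |E| · A_{2j}` for all `2 ≤ j ≤ k - 1`. -/
theorem girth_iff_trace
    (q1 q2 m n : ℕ) (hq1 : 1 ≤ q1) (hq12 : q1 ≤ q2) (hq2 : 2 ≤ q2)
    (hm : 0 < m) (hn : 0 < n)
    (H : Matrix (Fin m) (Fin n) ℝ)
    (hent : ∀ i j, H i j = 0 ∨ H i j = 1)
    (hcol : ∀ j, Nat.card {i : Fin m // H i j = 1} = q1 + 1)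
    (hrow : ∀ i, Nat.card {j : Fin n // H i j = 1} = q2 + 1)
    (hconn : (tannerGraph H).Connected)
    (k : ℕ) (hk3 : 3 ≤ k) (hk8 : k ≤ 8) :
    let s : ℝ := (q1 : ℝ) + q2
    let c : ℝ := (q1 : ℝ) * q2
    let A4 : ℝ := (q1 : ℝ) + q2 + 1
    let A6 : ℝ := ((q1 : ℝ) + q2 + 1) ^ 2 + c
    let A8 : ℝ := ((q1 : ℝ) + q2 + 1) ^ 3 + c * (3 * q1 + 3 * q2 + 2)
    let A10 : ℝ := -1 + ((q1 : ℝ) ^ 4 - (q1 : ℝ) ^ 3 + (q1 : ℝ) ^ 2 - q1 + 1)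
        + ((q2 : ℝ) ^ 4 - (q2 : ℝ) ^ 3 + (q2 : ℝ) ^ 2 - q2 + 1)
        - 5 * (∑ j ∈ Finset.range 5, (q1 : ℝ) ^ j * (q2 : ℝ) ^ (4 - j))
        + 5 * s * A8 - (10 * s ^ 2 - 5 * c) * A6 + (10 * s ^ 3 - 15 * c * s) * A4
    let A12 : ℝ := -1 - ((q1 : ℝ) ^ 5 - (q1 : ℝ) ^ 4 + (q1 : ℝ) ^ 3 - (q1 : ℝ) ^ 2 + q1 - 1)
        - ((q2 : ℝ) ^ 5 - (q2 : ℝ) ^ 4 + (q2 : ℝ) ^ 3 - (q2 : ℝ) ^ 2 + q2 - 1)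
        + 6 * (∑ j ∈ Finset.range 6, (q1 : ℝ) ^ j * (q2 : ℝ) ^ (5 - j))
        + 6 * s * A10 - (15 * s ^ 2 - 6 * c) * A8 + (20 * s ^ 3 - 24 * c * s) * A6
        - (15 * s ^ 4 - 36 * c * s ^ 2 + 9 * c ^ 2) * A4
    let A14 : ℝ := -1 + ((q1 : ℝ) ^ 6 - (q1 : ℝ) ^ 5 + (q1 : ℝ) ^ 4 - (q1 : ℝ) ^ 3 + (q1 : ℝ) ^ 2 - q1 + 1)
        + ((q2 : ℝ) ^ 6 - (q2 : ℝ) ^ 5 + (q2 : ℝ) ^ 4 - (q2 : ℝ) ^ 3 + (q2 : ℝ) ^ 2 - q2 + 1)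
        - 7 * (∑ j ∈ Finset.range 7, (q1 : ℝ) ^ j * (q2 : ℝ) ^ (6 - j))
        + 7 * s * A12 - (21 * s ^ 2 - 7 * c) * A10 + (35 * s ^ 3 - 35 * c * s) * A8
        - (35 * s ^ 4 - 70 * c * s ^ 2 + 14 * c ^ 2) * A6
        + (21 * s ^ 5 - 70 * c * s ^ 3 + 42 * c ^ 2 * s) * A4
    let A : ℕ → ℝ := fun j =>
      if j = 2 then A4 else if j = 3 then A6 else if j = 4 then A8
      else if j = 5 then A10 else if j = 6 then A12 else A14
    (((2 * k : ℕ) : ℕ∞) ≤ (tannerGraph H).egirth ↔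
      ∀ j : ℕ, 2 ≤ j → j ≤ k - 1 →
        Matrix.trace ((H * H.transpose) ^ j) = ((n * (q1 + 1) : ℕ) : ℝ) * A j) := by
  intro s c A4 A6 A8 A10 A12 A14 A
  have hrow' : ∀ i, ∑ j, H i j = (q2 : ℝ) + 1 := fun i => by
    rw [sum_eq_card (fun j => H i j) (hent i), hrow i]; push_cast; ring
  have hcol' : ∀ j, ∑ i, H i j = (q1 : ℝ) + 1 := fun j => by
    rw [sum_eq_card (fun i => H i j) (fun i => hent i j), hcol j]; push_cast; ring
  -- both sides count the edges of the Tanner graph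
  have hE : ((n * (q1 + 1) : ℕ) : ℝ) = (m : ℝ) * ((q2 : ℝ) + 1) := by
    have h1 : ∑ i, ∑ j, H i j = (m : ℝ) * ((q2 : ℝ) + 1) := by
      simp [hrow', mul_add]
    have h2 : ∑ j, ∑ i, H i j = (n : ℝ) * ((q1 : ℝ) + 1) := by
      simp [hcol', mul_add]
    have h3 : ∑ i, ∑ j, H i j = ∑ j, ∑ i, H i j := Finset.sum_comm
    push_cast
    linarith
  have hA : ∀ j, A j = treeConst q1 q2 j := fun j => rfl
  set B := H * Hᵀ with hB
  have key : ∀ J, 2 ≤ J → J ≤ 7 → (∀ l, l + 1 < J → (nbEven H l).trace = 0) →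
      (B ^ J).trace = (nbEven H (J - 1)).trace + ((n * (q1 + 1) : ℕ) : ℝ) * A J := by
    intro J hJ2 hJ7 hz
    rw [hE, hA]
    have h := trace_eq_of_recurrence q1 q2 m (fun j => (B ^ j).trace)
      (fun j l => (B ^ j * nbEven H l).trace) (by simp) ?_ ?_ ?_ J hJ2 hJ7 (by simpa using hz)
    · simpa using h
    · intro j
      have h0 : B = nbEven H 0 + ((q2 : ℝ) + 1) • 1 := by
        rw [nbEven_zero hent hrow', nbOdd_zero hent, hB]; abel
      have h1 : B ^ (j + 1) = B ^ j * nbEven H 0 + ((q2 : ℝ) + 1) • B ^ j := by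
        conv_lhs => rw [pow_succ]; arg 2; rw [h0]
        rw [Matrix.mul_add, Matrix.mul_smul, Matrix.mul_one]
      simp only [h1, Matrix.trace_add, Matrix.trace_smul, smul_eq_mul]
    · intro j
      simp only [pow_succ, Matrix.mul_assoc (B ^ j)]
      rw [hB, gram_mul_nbEven_zero hent hrow' hcol', ← hB]
      simp only [Matrix.mul_add, Matrix.mul_smul, Matrix.mul_one, Matrix.trace_add,
        Matrix.trace_smul, smul_eq_mul]
    · intro j l
      simp only [pow_succ, Matrix.mul_assoc (B ^ j)]
      rw [hB, gram_mul_nbEven_succ hent hrow' hcol', ← hB]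
      simp only [Matrix.mul_add, Matrix.mul_smul, Matrix.trace_add,
        Matrix.trace_smul, smul_eq_mul]
  rw [le_egirth_iff_trace_nbEven]
  constructor
  · intro hz j hj2 hjk
    rw [key j hj2 (by omega) fun l hl => hz l (by omega), hz (j - 1) (by omega), zero_add]
  · intro hT l
    induction l using Nat.strong_induction_on with
    | _ l ih =>
      intro hl
      rcases Nat.eq_zero_or_pos l with rfl | hpos
      -- a simple graph has no closed non-backtracking walk of length two
      · rw [nbEven_zero hent hrow', nbOdd_zero hent, Matrix.trace_sub, Matrix.trace_smul,
          Matrix.trace_one]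
        have hd : (H * Hᵀ).trace = ∑ i, ∑ j, H i j := by
          refine Finset.sum_congr rfl fun i _ => ?_
          rw [Matrix.diag_apply, Matrix.mul_apply]
          refine Finset.sum_congr rfl fun j _ => ?_
          rcases hent i j with h | h <;> simp [h]
        rw [hd]
        simp [hrow']
        ring
      · have h1 := key (l + 1) (by omega) (by omega) fun l' hl' => ih l' (by omega) (by omega)
        have h2 := hT (l + 1) (by omega) (by omega)
        rw [h2, Nat.add_sub_cancel] at h1
        linarith
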